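/- Let u be a smooth positive solution of the heat equation ∂u/∂t = Δu on U × (0,T), where U ⊆ ℝⁿ is open. Define the symmetric matrix Υ = ∇²u + (u/(2t)) I - (∇u ⊗ ∇u)/u and its trace Q = tr Υ = u( Δ log u + n/(2t) ). Then on U × (0,T) one has the identity (∂/∂t - Δ) Q = (2/u) ‖Υ‖²_F - (2/t) Q, where ‖·‖_F is the Frobenius norm. -/

import Mathlib

open Real MeasureTheory Filter Set

/-- `i`-th partial derivative of `f : ℝⁿ → ℝ`. -/
noncomputable def pdv {n : ℕ} (i : Fin n) (f : EuclideanSpace ℝ (Fin n) → ℝ)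
    (y : EuclideanSpace ℝ (Fin n)) : ℝ :=
  fderiv ℝ f y (EuclideanSpace.single i 1)

/-- `(i,j)` entry of the Hessian of `f : ℝⁿ → ℝ`. -/
noncomputable def hess {n : ℕ} (i j : Fin n) (f : EuclideanSpace ℝ (Fin n) → ℝ)
    (y : EuclideanSpace ℝ (Fin n)) : ℝ :=
  pdv i (pdv j f) y

/-- Euclidean Laplacian (trace of the Hessian) of `f : ℝⁿ → ℝ`. -/
noncomputable def lap {n : ℕ} (f : EuclideanSpace ℝ (Fin n) → ℝ)
    (y : EuclideanSpace ℝ (Fin n)) : ℝ :=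
  ∑ i, hess i i f y

/-!
Let `L = ∂ₜ - Δ`. Constant-coefficient derivatives commute with `L`, so `L u = 0` gives
`L (∂ᵢ u) = 0` and `L (Δ u) = 0`. If `L f = L u = 0`, then completing a square gives
`L (f² / u) = -(2 / u) |∇f - (f / u) ∇u|²`; taking `f = ∂ᵢ u` and summing over `i`, the term
`|∇u|² / u` of `Q = Δu + (n / 2t) u - |∇u|² / u` contributes `(2 / u) ‖A‖²` to `L Q`, where
`A = ∇²u - (∇u ⊗ ∇u) / u`. The weight `n / 2t` contributes `-(n / 2t²) u`, and expanding
`‖A + (u / 2t) I‖²` identifies the sum.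
-/

open Function (uncurry)
open scoped Topology ContDiff

section HeatOperator

variable {V F ι κ : Type*} [NormedAddCommGroup V] [NormedSpace ℝ V]
  [NormedAddCommGroup F] [NormedSpace ℝ F] {p : V}

/-- The derivative `∂ᵥ f` of `f` in the direction `v`, as a function of the base point, so that it
can be iterated. -/
noncomputable def dirDeriv (v : V) (f : V → F) (p : V) : F :=
  fderiv ℝ f p v

theorem dirDeriv_congr {f g : V → F} (h : f =ᶠ[𝓝 p] g) (v : V) :
    dirDeriv v f =ᶠ[𝓝 p] dirDeriv v g :=
  h.fderiv.fun_comp (· v)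

theorem contDiffAt_dirDeriv {f : V → F} {m k : ℕ∞ω} (hf : ContDiffAt ℝ k f p) (hmk : m + 1 ≤ k)
    (v : V) : ContDiffAt ℝ m (dirDeriv v f) p :=
  (hf.fderiv_right hmk).clm_apply contDiffAt_const

theorem contDiffAt_sum {s : Finset κ} {f : κ → V → F} {m : ℕ∞ω}
    (hf : ∀ i ∈ s, ContDiffAt ℝ m (f i) p) : ContDiffAt ℝ m (∑ i ∈ s, f i) p := by
  rw [Finset.sum_fn]
  exact ContDiffAt.sum hf

theorem eventually_differentiableAt_of_contDiffAt {f : V → F} (hf : ContDiffAt ℝ 1 f p) :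
    ∀ᶠ q in 𝓝 p, DifferentiableAt ℝ f q :=
  (hf.eventually (by simp)).mono fun _ hq => hq.differentiableAt one_ne_zero

theorem dirDeriv_zero (v : V) : dirDeriv v (0 : V → F) = 0 := by
  funext q
  simp [dirDeriv]

theorem dirDeriv_add {f g : V → F} (hf : ContDiffAt ℝ 1 f p) (hg : ContDiffAt ℝ 1 g p) (v : V) :
    dirDeriv v (f + g) =ᶠ[𝓝 p] dirDeriv v f + dirDeriv v g := by
  filter_upwards [eventually_differentiableAt_of_contDiffAt hf,
    eventually_differentiableAt_of_contDiffAt hg] with q hfq hgq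
  simp [dirDeriv, fderiv_add hfq hgq]

theorem dirDeriv_sub {f g : V → F} (hf : ContDiffAt ℝ 1 f p) (hg : ContDiffAt ℝ 1 g p) (v : V) :
    dirDeriv v (f - g) =ᶠ[𝓝 p] dirDeriv v f - dirDeriv v g := by
  filter_upwards [eventually_differentiableAt_of_contDiffAt hf,
    eventually_differentiableAt_of_contDiffAt hg] with q hfq hgq
  simp [dirDeriv, fderiv_sub hfq hgq]

theorem dirDeriv_sum {s : Finset κ} {f : κ → V → F} (hf : ∀ i ∈ s, ContDiffAt ℝ 1 (f i) p)
    (v : V) : dirDeriv v (∑ i ∈ s, f i) =ᶠ[𝓝 p] ∑ i ∈ s, dirDeriv v (f i) := by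
  have hdiff : ∀ᶠ q in 𝓝 p, ∀ i ∈ s, DifferentiableAt ℝ (f i) q :=
    (eventually_all_finset s).2 fun i hi => eventually_differentiableAt_of_contDiffAt (hf i hi)
  filter_upwards [hdiff] with q hq
  simp [dirDeriv, fderiv_sum hq]

theorem dirDeriv_mul {f g : V → ℝ} (hf : ContDiffAt ℝ 1 f p) (hg : ContDiffAt ℝ 1 g p) (v : V) :
    dirDeriv v (f * g) =ᶠ[𝓝 p] f * dirDeriv v g + g * dirDeriv v f := by
  filter_upwards [eventually_differentiableAt_of_contDiffAt hf,
    eventually_differentiableAt_of_contDiffAt hg] with q hfq hgq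
  simp [dirDeriv, fderiv_mul hfq hgq]

theorem dirDeriv_div {f g : V → ℝ} (hf : DifferentiableAt ℝ f p) (hg : DifferentiableAt ℝ g p)
    (hne : g p ≠ 0) (v : V) :
    dirDeriv v (f / g) p = (g p * dirDeriv v f p - f p * dirDeriv v g p) / g p ^ 2 := by
  have hderiv := hf.hasFDerivAt.mul ((hasDerivAt_inv hne).comp_hasFDerivAt p hg.hasFDerivAt)
  change fderiv ℝ (f * Inv.inv ∘ g) p v = _
  simp only [hderiv.fderiv, neg_smul, smul_neg, Function.comp_apply, add_apply, neg_apply,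
    smul_apply, smul_eq_mul, dirDeriv]
  field_simp
  ring

theorem dirDeriv_log {f : V → ℝ} (hf : ContDiffAt ℝ 1 f p) (hne : f p ≠ 0) (v : V) :
    dirDeriv v (fun q => Real.log (f q)) =ᶠ[𝓝 p] dirDeriv v f / f := by
  filter_upwards [eventually_differentiableAt_of_contDiffAt hf,
    hf.continuousAt.eventually_ne hne] with q hfq hq
  simp [dirDeriv, fderiv.log hfq hq, div_eq_inv_mul]

theorem dirDeriv_dirDeriv_log {f : V → ℝ} (hf : ContDiffAt ℝ 2 f p) (hne : f p ≠ 0) (v w : V) :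
    dirDeriv v (dirDeriv w fun q => Real.log (f q)) p =
      dirDeriv v (dirDeriv w f) p / f p - dirDeriv v f p * dirDeriv w f p / f p ^ 2 := by
  have hf₁ : ContDiffAt ℝ 1 f p := hf.of_le one_le_two
  have hdf : ContDiffAt ℝ 1 (dirDeriv w f) p := contDiffAt_dirDeriv hf (by norm_num) w
  rw [(dirDeriv_congr (dirDeriv_log hf₁ hne w) v).self_of_nhds,
    dirDeriv_div (hdf.differentiableAt one_ne_zero) (hf₁.differentiableAt one_ne_zero) hne]
  field_simp

theorem dirDeriv_dirDeriv {f : V → F} (hf : ContDiffAt ℝ 2 f p) (v w : V) :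
    dirDeriv v (dirDeriv w f) p = fderiv ℝ (fderiv ℝ f) p v w := by
  have hdf : DifferentiableAt ℝ (fderiv ℝ f) p :=
    (hf.fderiv_right (m := 1) (by norm_num)).differentiableAt one_ne_zero
  change fderiv ℝ (fun q => fderiv ℝ f q w) p v = _
  simp [fderiv_clm_apply hdf (differentiableAt_const w)]

theorem dirDeriv_comm {f : V → F} (hf : ContDiffAt ℝ 2 f p) (v w : V) :
    dirDeriv v (dirDeriv w f) =ᶠ[𝓝 p] dirDeriv w (dirDeriv v f) := by
  filter_upwards [hf.eventually (by simp)] with q hq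
  rw [dirDeriv_dirDeriv hq, dirDeriv_dirDeriv hq]
  exact hq.isSymmSndFDerivAt (by simp) v w

variable [Fintype ι] (e : ι → V) (τ : V)

/-- The heat operator `∂_τ - ∑ₖ ∂²_{e k}`, with time direction `τ` and space directions `e`. -/
noncomputable def heatOp (f : V → F) (p : V) : F :=
  dirDeriv τ f p - ∑ k, dirDeriv (e k) (dirDeriv (e k) f) p

variable {e τ}

theorem heatOp_congr {f g : V → F} (h : f =ᶠ[𝓝 p] g) : heatOp e τ f p = heatOp e τ g p := by
  have second_order (k : ι) :
      dirDeriv (e k) (dirDeriv (e k) f) p = dirDeriv (e k) (dirDeriv (e k) g) p :=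
    (dirDeriv_congr (dirDeriv_congr h (e k)) (e k)).self_of_nhds
  simp only [heatOp, (dirDeriv_congr h τ).self_of_nhds, second_order]

theorem heatOp_add {f g : V → F} (hf : ContDiffAt ℝ 2 f p) (hg : ContDiffAt ℝ 2 g p) :
    heatOp e τ (f + g) p = heatOp e τ f p + heatOp e τ g p := by
  have first_order := dirDeriv_add (hf.of_le one_le_two) (hg.of_le one_le_two)
  have second_order (k : ι) : dirDeriv (e k) (dirDeriv (e k) (f + g)) p =
      dirDeriv (e k) (dirDeriv (e k) f) p + dirDeriv (e k) (dirDeriv (e k) g) p := by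
    rw [(dirDeriv_congr (first_order (e k)) (e k)).self_of_nhds]
    exact (dirDeriv_add (contDiffAt_dirDeriv hf (by norm_num) _)
      (contDiffAt_dirDeriv hg (by norm_num) _) _).self_of_nhds
  simp only [heatOp, (first_order τ).self_of_nhds, second_order, Pi.add_apply,
    Finset.sum_add_distrib]
  abel

theorem heatOp_sub {f g : V → F} (hf : ContDiffAt ℝ 2 f p) (hg : ContDiffAt ℝ 2 g p) :
    heatOp e τ (f - g) p = heatOp e τ f p - heatOp e τ g p := by
  have hfg : ContDiffAt ℝ 2 (f - g) p := hf.sub hg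
  have h := heatOp_add (e := e) (τ := τ) hfg hg
  rwa [sub_add_cancel, eq_comm, ← eq_sub_iff_add_eq] at h

theorem heatOp_sum {s : Finset κ} {f : κ → V → F} (hf : ∀ i ∈ s, ContDiffAt ℝ 2 (f i) p) :
    heatOp e τ (∑ i ∈ s, f i) p = ∑ i ∈ s, heatOp e τ (f i) p := by
  have first_order := dirDeriv_sum fun i hi => (hf i hi).of_le one_le_two
  have second_order (k : ι) : dirDeriv (e k) (dirDeriv (e k) (∑ i ∈ s, f i)) p =
      ∑ i ∈ s, dirDeriv (e k) (dirDeriv (e k) (f i)) p := by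
    rw [(dirDeriv_congr (first_order (e k)) (e k)).self_of_nhds]
    simpa using (dirDeriv_sum (fun i hi => contDiffAt_dirDeriv (hf i hi) (by norm_num) (e k))
      (e k)).self_of_nhds
  simp only [heatOp, (first_order τ).self_of_nhds, second_order, Finset.sum_apply,
    Finset.sum_sub_distrib]
  rw [Finset.sum_comm]

theorem heatOp_mul {f g : V → ℝ} (hf : ContDiffAt ℝ 2 f p) (hg : ContDiffAt ℝ 2 g p) :
    heatOp e τ (f * g) p = f p * heatOp e τ g p + g p * heatOp e τ f p
      - 2 * ∑ k, dirDeriv (e k) f p * dirDeriv (e k) g p := by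
  have hf₁ : ContDiffAt ℝ 1 f p := hf.of_le one_le_two
  have hg₁ : ContDiffAt ℝ 1 g p := hg.of_le one_le_two
  have second_order (k : ι) : dirDeriv (e k) (dirDeriv (e k) (f * g)) p =
      f p * dirDeriv (e k) (dirDeriv (e k) g) p + g p * dirDeriv (e k) (dirDeriv (e k) f) p
        + 2 * (dirDeriv (e k) f p * dirDeriv (e k) g p) := by
    have hdf : ContDiffAt ℝ 1 (dirDeriv (e k) f) p := contDiffAt_dirDeriv hf (by norm_num) _
    have hdg : ContDiffAt ℝ 1 (dirDeriv (e k) g) p := contDiffAt_dirDeriv hg (by norm_num) _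
    rw [(dirDeriv_congr (dirDeriv_mul hf₁ hg₁ (e k)) (e k)).self_of_nhds,
      (dirDeriv_add (f := f * _) (g := g * _) (hf₁.mul hdg) (hg₁.mul hdf)
        (e k)).self_of_nhds, Pi.add_apply,
      (dirDeriv_mul hf₁ hdg (e k)).self_of_nhds, (dirDeriv_mul hg₁ hdf (e k)).self_of_nhds]
    simp only [Pi.add_apply, Pi.mul_apply]
    ring
  simp only [heatOp, (dirDeriv_mul hf₁ hg₁ τ).self_of_nhds, second_order, Pi.add_apply,
    Pi.mul_apply, Finset.sum_add_distrib, ← Finset.mul_sum]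
  ring

theorem heatOp_dirDeriv {f : V → F} (hf : ContDiffAt ℝ 3 f p) (v : V) :
    heatOp e τ (dirDeriv v f) p = dirDeriv v (heatOp e τ f) p := by
  have hf₂ : ContDiffAt ℝ 2 f p := hf.of_le (by norm_num)
  have hd (w : V) : ContDiffAt ℝ 2 (dirDeriv w f) p := contDiffAt_dirDeriv hf (by norm_num) w
  have hdd (w : V) : ContDiffAt ℝ 1 (dirDeriv w (dirDeriv w f)) p :=
    contDiffAt_dirDeriv (hd w) (by norm_num) w
  have second_order (k : ι) : dirDeriv (e k) (dirDeriv (e k) (dirDeriv v f)) p =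
      dirDeriv v (dirDeriv (e k) (dirDeriv (e k) f)) p := by
    rw [(dirDeriv_congr (dirDeriv_comm hf₂ (e k) v) (e k)).self_of_nhds,
      (dirDeriv_comm (hd (e k)) (e k) v).self_of_nhds]
  have heatOp_eq : heatOp e τ f = dirDeriv τ f - ∑ k, dirDeriv (e k) (dirDeriv (e k) f) := by
    funext q
    simp [heatOp]
  have hsum : ContDiffAt ℝ 1 (∑ k, dirDeriv (e k) (dirDeriv (e k) f)) p :=
    contDiffAt_sum fun k _ => hdd (e k)
  rw [heatOp_eq, (dirDeriv_sub ((hd τ).of_le one_le_two) hsum v).self_of_nhds]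
  simp only [heatOp, (dirDeriv_comm hf₂ τ v).self_of_nhds, second_order, Pi.sub_apply,
    (dirDeriv_sum (fun k _ => hdd (e k)) v).self_of_nhds, Finset.sum_apply]

theorem heatOp_dirDeriv_eq_zero {f : V → F} (hf : ContDiffAt ℝ 3 f p)
    (hheat : heatOp e τ f =ᶠ[𝓝 p] 0) (v : V) : heatOp e τ (dirDeriv v f) =ᶠ[𝓝 p] 0 := by
  filter_upwards [hf.eventually (by simp), dirDeriv_congr hheat v] with q hfq hq
  rw [heatOp_dirDeriv hfq, hq, dirDeriv_zero]

-- Writing `h = f² / w`, the product rule applied to both sides of `h w = f²` determines `heatOp h`.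
theorem heatOp_sq_div {f w : V → ℝ} (hf : ContDiffAt ℝ 2 f p) (hw : ContDiffAt ℝ 2 w p)
    (hne : w p ≠ 0) :
    heatOp e τ (f ^ 2 / w) p =
      2 * f p / w p * heatOp e τ f p - (f p / w p) ^ 2 * heatOp e τ w p
        - 2 / w p * ∑ k, (dirDeriv (e k) f p - f p * dirDeriv (e k) w p / w p) ^ 2 := by
  have hf₁ : ContDiffAt ℝ 1 f p := hf.of_le one_le_two
  have hf_sq : ContDiffAt ℝ 2 (f ^ 2) p := hf.pow 2
  have gradient (k : ι) : dirDeriv (e k) (f ^ 2 / w) p =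
      (2 * f p * w p * dirDeriv (e k) f p - f p ^ 2 * dirDeriv (e k) w p) / w p ^ 2 := by
    rw [dirDeriv_div (hf_sq.differentiableAt two_ne_zero) (hw.differentiableAt two_ne_zero) hne,
      sq f, (dirDeriv_mul hf₁ hf₁ (e k)).self_of_nhds]
    simp only [Pi.add_apply, Pi.mul_apply]
    ring
  have complete_square :
      ∑ k, dirDeriv (e k) f p * dirDeriv (e k) f p
          - ∑ k, dirDeriv (e k) (f ^ 2 / w) p * dirDeriv (e k) w p =
        ∑ k, (dirDeriv (e k) f p - f p * dirDeriv (e k) w p / w p) ^ 2 := by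
    rw [← Finset.sum_sub_distrib]
    refine Finset.sum_congr rfl fun k _ => ?_
    rw [gradient]
    field_simp
    ring
  have div_mul : f ^ 2 / w * w =ᶠ[𝓝 p] f * f := by
    filter_upwards [hw.continuousAt.eventually_ne hne] with q hq
    simp [div_mul_cancel₀ _ hq, sq]
  have product_rule := heatOp_congr (e := e) (τ := τ) div_mul
  rw [heatOp_mul (hf_sq.div hw hne) hw, heatOp_mul hf hf] at product_rule
  simp only [Pi.div_apply, Pi.pow_apply] at product_rule
  rw [← complete_square]
  field_simp at product_rule ⊢
  linear_combination product_rule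

theorem heatOp_sum_dirDeriv_dirDeriv_eq_zero {f : V → F} (hf : ContDiffAt ℝ 4 f p)
    (hheat : heatOp e τ f =ᶠ[𝓝 p] 0) :
    heatOp e τ (∑ i, dirDeriv (e i) (dirDeriv (e i) f)) p = 0 := by
  have hd (i : ι) : ContDiffAt ℝ 3 (dirDeriv (e i) f) p := contDiffAt_dirDeriv hf (by norm_num) _
  rw [heatOp_sum fun i _ => contDiffAt_dirDeriv (hd i) (by norm_num) _]
  refine Finset.sum_eq_zero fun i _ => ?_
  exact (heatOp_dirDeriv_eq_zero (hd i)
    (heatOp_dirDeriv_eq_zero (hf.of_le (by norm_num)) hheat _) _).self_of_nhds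

theorem heatOp_sum_dirDeriv_sq_div {w : V → ℝ} (hw : ContDiffAt ℝ 3 w p) (hne : w p ≠ 0)
    (hheat : heatOp e τ w =ᶠ[𝓝 p] 0) :
    heatOp e τ (∑ i, dirDeriv (e i) w ^ 2 / w) p =
      -(2 / w p * ∑ i, ∑ j, (dirDeriv (e i) (dirDeriv (e j) w) p
        - dirDeriv (e i) w p * dirDeriv (e j) w p / w p) ^ 2) := by
  have hw₂ : ContDiffAt ℝ 2 w p := hw.of_le (by norm_num)
  have hd (i : ι) : ContDiffAt ℝ 2 (dirDeriv (e i) w) p := contDiffAt_dirDeriv hw (by norm_num) _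
  have summand (i : ι) : heatOp e τ (dirDeriv (e i) w ^ 2 / w) p =
      -(2 / w p * ∑ k, (dirDeriv (e k) (dirDeriv (e i) w) p
        - dirDeriv (e k) w p * dirDeriv (e i) w p / w p) ^ 2) := by
    rw [heatOp_sq_div (hd i) hw₂ hne, hheat.self_of_nhds,
      (heatOp_dirDeriv_eq_zero hw hheat (e i)).self_of_nhds]
    simp [mul_comm]
  have hquot (i : ι) : ContDiffAt ℝ 2 (dirDeriv (e i) w ^ 2 / w) p := ((hd i).pow 2).div hw₂ hne
  rw [heatOp_sum fun i _ => hquot i, Finset.sum_comm]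
  simp only [summand, Finset.sum_neg_distrib, Finset.mul_sum]

end HeatOperator

section SpaceTime

variable {n : ℕ}

/-- The `i`-th space direction in space-time `ℝⁿ × ℝ`. -/
noncomputable def spaceDir (i : Fin n) : EuclideanSpace ℝ (Fin n) × ℝ :=
  (EuclideanSpace.single i 1, 0)

variable {u : EuclideanSpace ℝ (Fin n) → ℝ → ℝ} {y : EuclideanSpace ℝ (Fin n)} {t : ℝ}

theorem pdv_eq_dirDeriv (hu : DifferentiableAt ℝ (uncurry u) (y, t)) (i : Fin n) :
    pdv i (fun z => u z t) y = dirDeriv (spaceDir i) (uncurry u) (y, t) := by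
  have hslice : HasFDerivAt (fun z => u z t) _ y :=
    hu.hasFDerivAt.comp (f := fun z => (z, t)) y (hasFDerivAt_prodMk_left y t)
  simp [pdv, dirDeriv, spaceDir, hslice.fderiv]

theorem deriv_eq_dirDeriv (hu : DifferentiableAt ℝ (uncurry u) (y, t)) :
    deriv (fun s => u y s) t = dirDeriv (0, 1) (uncurry u) (y, t) := by
  have hslice : HasFDerivAt (fun s => u y s) _ t :=
    hu.hasFDerivAt.comp (f := fun s => (y, s)) t (hasFDerivAt_prodMk_right y t)
  simp [dirDeriv, ← fderiv_apply_one_eq_deriv, hslice.fderiv]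

theorem hess_eq_dirDeriv (hu : ContDiffAt ℝ 2 (uncurry u) (y, t)) (i j : Fin n) :
    hess i j (fun z => u z t) y =
      dirDeriv (spaceDir i) (dirDeriv (spaceDir j) (uncurry u)) (y, t) := by
  have hpdv : uncurry (fun z s => pdv j (fun z => u z s) z) =ᶠ[𝓝 (y, t)]
      dirDeriv (spaceDir j) (uncurry u) := by
    filter_upwards [eventually_differentiableAt_of_contDiffAt (hu.of_le one_le_two)] with q hq
    exact pdv_eq_dirDeriv hq j
  have hdiff : DifferentiableAt ℝ (dirDeriv (spaceDir j) (uncurry u)) (y, t) :=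
    (contDiffAt_dirDeriv (m := 1) hu (by norm_num) _).differentiableAt one_ne_zero
  rw [hess, pdv_eq_dirDeriv (u := fun z s => pdv j (fun z => u z s) z)
    (hdiff.congr_of_eventuallyEq hpdv), (dirDeriv_congr hpdv _).self_of_nhds]

theorem deriv_sub_lap_eq_heatOp (hu : ContDiffAt ℝ 2 (uncurry u) (y, t)) :
    deriv (fun s => u y s) t - lap (fun z => u z t) y =
      heatOp spaceDir (0, 1) (uncurry u) (y, t) := by
  simp only [lap, heatOp, deriv_eq_dirDeriv (hu.differentiableAt two_ne_zero),
    hess_eq_dirDeriv hu]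

theorem lap_log {f : EuclideanSpace ℝ (Fin n) → ℝ} (hf : ContDiffAt ℝ 2 f y) (hne : f y ≠ 0) :
    lap (fun z => Real.log (f z)) y = lap f y / f y - (∑ i, pdv i f y ^ 2) / f y ^ 2 := by
  have second_order (i : Fin n) : hess i i (fun z => Real.log (f z)) y =
      hess i i f y / f y - pdv i f y * pdv i f y / f y ^ 2 :=
    dirDeriv_dirDeriv_log hf hne _ _
  simp only [lap, second_order, Finset.sum_sub_distrib, ← Finset.sum_div, ← sq]

theorem heatOp_time_mul {g : ℝ → ℝ} {f : EuclideanSpace ℝ (Fin n) × ℝ → ℝ}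
    (hg : ContDiffAt ℝ 2 g t) (hf : ContDiffAt ℝ 2 f (y, t)) :
    heatOp spaceDir (0, 1) ((fun q => g q.2) * f) (y, t) =
      g t * heatOp spaceDir (0, 1) f (y, t) + deriv g t * f (y, t) := by
  have hgt : ContDiffAt ℝ 2 (uncurry fun (_ : EuclideanSpace ℝ (Fin n)) s => g s) (y, t) :=
    hg.comp (y, t) contDiffAt_snd
  have pdv_const (c : ℝ) (i : Fin n) :
      pdv i (fun _ : EuclideanSpace ℝ (Fin n) => c) = fun _ => 0 := by
    funext z
    simp [pdv]
  have gradient_time (k : Fin n) : dirDeriv (spaceDir k) (uncurry fun _ s => g s) (y, t) = 0 := by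
    rw [← pdv_eq_dirDeriv (hgt.differentiableAt two_ne_zero), pdv_const]
  have heatOp_time : heatOp spaceDir (0, 1) (uncurry fun (_ : EuclideanSpace ℝ (Fin n)) s => g s)
      (y, t) = deriv g t := by
    rw [← deriv_sub_lap_eq_heatOp hgt]
    simp [lap, hess, pdv_const]
  change heatOp spaceDir (0, 1) ((uncurry fun _ s => g s) * f) (y, t) = _
  rw [heatOp_mul hgt hf, heatOp_time]
  simp [gradient_time, mul_comm]

end SpaceTime

section LiYau

variable {n : ℕ}

/-- The Li–Yau matrix `Υ = ∇²u + (u / (2t)) I - (∇u ⊗ ∇u) / u`. -/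
noncomputable def liYauMatrix (u : EuclideanSpace ℝ (Fin n) → ℝ → ℝ)
    (y : EuclideanSpace ℝ (Fin n)) (t : ℝ) (i j : Fin n) : ℝ :=
  hess i j (fun z => u z t) y + (u y t / (2 * t)) * (if i = j then 1 else 0)
    - pdv i (fun z => u z t) y * pdv j (fun z => u z t) y / u y t

/-- The Li–Yau quantity `Q = tr Υ`. -/
noncomputable def liYauTrace (u : EuclideanSpace ℝ (Fin n) → ℝ → ℝ)
    (y : EuclideanSpace ℝ (Fin n)) (t : ℝ) : ℝ :=
  ∑ i, liYauMatrix u y t i i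

theorem sum_sum_add_ite_sq {ι R : Type*} [Fintype ι] [DecidableEq ι] [CommSemiring R]
    (A : ι → ι → R) (c : R) :
    ∑ i, ∑ j, (A i j + c * if i = j then 1 else 0) ^ 2 =
      ∑ i, ∑ j, A i j ^ 2 + 2 * c * ∑ i, A i i + Fintype.card ι * c ^ 2 := by
  simp [add_sq, Finset.sum_add_distrib, Finset.mul_sum, mul_comm, mul_left_comm]

theorem liYauTrace_eq (u : EuclideanSpace ℝ (Fin n) → ℝ → ℝ) (y : EuclideanSpace ℝ (Fin n))
    (t : ℝ) :
    liYauTrace u y t = lap (fun z => u z t) y + n / (2 * t) * u y t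
      - ∑ i, pdv i (fun z => u z t) y ^ 2 / u y t := by
  simp only [liYauTrace, liYauMatrix, lap, if_pos, mul_one, Finset.sum_add_distrib,
    Finset.sum_sub_distrib, Finset.sum_const, Finset.card_univ, Fintype.card_fin, nsmul_eq_mul, sq]
  ring

variable {u : EuclideanSpace ℝ (Fin n) → ℝ → ℝ} {y : EuclideanSpace ℝ (Fin n)} {t : ℝ}

theorem liYauTrace_eq_mul_lap_log (hu : ContDiffAt ℝ 2 (fun z => u z t) y) (hne : u y t ≠ 0) :
    liYauTrace u y t = u y t * (lap (fun z => Real.log (u z t)) y + n / (2 * t)) := by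
  rw [liYauTrace_eq, lap_log hu hne, ← Finset.sum_div]
  field_simp
  ring

theorem uncurry_liYauTrace_eventuallyEq (hu : ContDiffAt ℝ 2 (uncurry u) (y, t)) :
    uncurry (liYauTrace u) =ᶠ[𝓝 (y, t)]
      ∑ i, dirDeriv (spaceDir i) (dirDeriv (spaceDir i) (uncurry u))
        + (fun q => (n : ℝ) / (2 * q.2)) * uncurry u
        - ∑ i, dirDeriv (spaceDir i) (uncurry u) ^ 2 / uncurry u := by
  filter_upwards [hu.eventually (by simp)] with ⟨z, s⟩ hzs
  simp [liYauTrace_eq, lap, hess_eq_dirDeriv hzs,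
    pdv_eq_dirDeriv (hzs.differentiableAt two_ne_zero)]

theorem deriv_div_two_mul (c s : ℝ) : deriv (fun r => c / (2 * r)) s = -(c / (2 * s ^ 2)) := by
  have hinv : (fun r : ℝ => c / (2 * r)) = fun r => c / 2 * r⁻¹ := by
    funext r
    field_simp
  rw [hinv, deriv_const_mul_field, deriv_inv]
  field_simp

theorem deriv_sub_lap_liYauTrace (hu : ContDiffAt ℝ 4 (uncurry u) (y, t)) (hne : u y t ≠ 0)
    (ht : t ≠ 0) (hheat : heatOp spaceDir (0, 1) (uncurry u) =ᶠ[𝓝 (y, t)] 0) :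
    deriv (fun s => liYauTrace u y s) t - lap (fun z => liYauTrace u z t) y =
      2 / u y t * ∑ i, ∑ j, (hess i j (fun z => u z t) y
          - pdv i (fun z => u z t) y * pdv j (fun z => u z t) y / u y t) ^ 2
        - n / (2 * t ^ 2) * u y t := by
  have hu₂ : ContDiffAt ℝ 2 (uncurry u) (y, t) := hu.of_le (by norm_num)
  have hu₃ : ContDiffAt ℝ 3 (uncurry u) (y, t) := hu.of_le (by norm_num)
  have hd (i : Fin n) : ContDiffAt ℝ 3 (dirDeriv (spaceDir i) (uncurry u)) (y, t) :=
    contDiffAt_dirDeriv hu (by norm_num) _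
  have hweight : ContDiffAt ℝ 2 (fun s => (n : ℝ) / (2 * s)) t :=
    contDiffAt_const.div (contDiffAt_const.mul contDiffAt_id) (by simpa)
  have hlap : ContDiffAt ℝ 2
      (∑ i, dirDeriv (spaceDir i) (dirDeriv (spaceDir i) (uncurry u))) (y, t) :=
    contDiffAt_sum fun i _ => contDiffAt_dirDeriv (hd i) (by norm_num) _
  have hweight_time : ContDiffAt ℝ 2
      (fun q : EuclideanSpace ℝ (Fin n) × ℝ => (n : ℝ) / (2 * q.2)) (y, t) :=
    hweight.comp (f := Prod.snd) (y, t) contDiffAt_snd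
  have htime : ContDiffAt ℝ 2 ((fun q => (n : ℝ) / (2 * q.2)) * uncurry u) (y, t) :=
    hweight_time.mul hu₂
  have hlap_add_time : ContDiffAt ℝ 2
      (∑ i, dirDeriv (spaceDir i) (dirDeriv (spaceDir i) (uncurry u))
        + (fun q => (n : ℝ) / (2 * q.2)) * uncurry u) (y, t) :=
    hlap.add htime
  have hgrad : ContDiffAt ℝ 2
      (∑ i, dirDeriv (spaceDir i) (uncurry u) ^ 2 / uncurry u) (y, t) :=
    contDiffAt_sum fun i _ => (((hd i).of_le (by norm_num)).pow 2).div hu₂ hne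
  have hQ := uncurry_liYauTrace_eventuallyEq hu₂
  rw [deriv_sub_lap_eq_heatOp ((hlap_add_time.sub hgrad).congr_of_eventuallyEq hQ),
    heatOp_congr hQ, heatOp_sub hlap_add_time hgrad, heatOp_add hlap htime,
    heatOp_sum_dirDeriv_dirDeriv_eq_zero hu hheat, heatOp_time_mul hweight hu₂,
    heatOp_sum_dirDeriv_sq_div hu₃ hne hheat, hheat.self_of_nhds, deriv_div_two_mul]
  simp only [hess_eq_dirDeriv hu₂, pdv_eq_dirDeriv (hu₂.differentiableAt two_ne_zero),
    Function.uncurry_apply_pair, Pi.zero_apply]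
  ring

theorem two_div_mul_sum_sum_liYauMatrix_sq (hne : u y t ≠ 0) :
    2 / u y t * ∑ i, ∑ j, liYauMatrix u y t i j ^ 2 =
      2 / u y t * ∑ i, ∑ j, (hess i j (fun z => u z t) y
          - pdv i (fun z => u z t) y * pdv j (fun z => u z t) y / u y t) ^ 2
        + 2 / t * liYauTrace u y t - n / (2 * t ^ 2) * u y t := by
  have trace : ∑ i, (hess i i (fun z => u z t) y
      - pdv i (fun z => u z t) y * pdv i (fun z => u z t) y / u y t) =
      liYauTrace u y t - n / (2 * t) * u y t := by
    rw [liYauTrace_eq, Finset.sum_sub_distrib, lap]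
    simp only [← sq]
    ring
  simp only [liYauMatrix, add_sub_right_comm]
  rw [sum_sum_add_ite_sq, trace, Fintype.card_fin]
  field_simp
  ring

theorem stmt6_general (hu : ContDiffAt ℝ 4 (uncurry u) (y, t)) (hpos : 0 < u y t) (ht : t ≠ 0)
    (hheat : ∀ᶠ q in 𝓝 (y, t), deriv (fun s => u q.1 s) q.2 = lap (fun z => u z q.2) q.1)
    {Υ : EuclideanSpace ℝ (Fin n) → ℝ → Fin n → Fin n → ℝ}
    (hΥ : ∀ y t i j, Υ y t i j
      = hess i j (fun z => u z t) y + (u y t / (2 * t)) * (if i = j then 1 else 0)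
        - pdv i (fun z => u z t) y * pdv j (fun z => u z t) y / u y t)
    {Q : EuclideanSpace ℝ (Fin n) → ℝ → ℝ} (hQ : ∀ y t, Q y t = ∑ i, Υ y t i i) :
    Q y t = u y t * (lap (fun z => Real.log (u z t)) y + n / (2 * t)) ∧
      deriv (fun s => Q y s) t - lap (fun z => Q z t) y =
        2 / u y t * ∑ i, ∑ j, Υ y t i j ^ 2 - 2 / t * Q y t := by
  obtain rfl : Υ = liYauMatrix u := by
    funext y t i j
    exact hΥ y t i j
  obtain rfl : Q = liYauTrace u := by
    funext y t
    exact hQ y t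
  have hu₂ : ContDiffAt ℝ 2 (uncurry u) (y, t) := hu.of_le (by norm_num)
  have hslice : ContDiffAt ℝ 2 (fun z => u z t) y :=
    hu₂.comp (f := fun z => (z, t)) y (contDiffAt_id.prodMk contDiffAt_const)
  have hheatOp : heatOp spaceDir (0, 1) (uncurry u) =ᶠ[𝓝 (y, t)] 0 := by
    filter_upwards [hheat, hu₂.eventually (by simp)] with q hq huq
    rw [← deriv_sub_lap_eq_heatOp huq, hq, sub_self, Pi.zero_apply]
  refine ⟨liYauTrace_eq_mul_lap_log hslice hpos.ne', ?_⟩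
  rw [deriv_sub_lap_liYauTrace hu hpos.ne' ht hheatOp, two_div_mul_sum_sum_liYauMatrix_sq hpos.ne']
  ring

end LiYau

/-- Flat-space evolution identity for the Li–Yau quantity: with
`Υ = ∇²u + (u/(2t)) I - (∇u ⊗ ∇u)/u` and `Q = tr Υ = u(Δ log u + n/(2t))`,
one has `(∂/∂t - Δ) Q = (2/u) ‖Υ‖²_F - (2/t) Q`. -/
theorem stmt6 (n : ℕ) (U : Set (EuclideanSpace ℝ (Fin n))) (hU : IsOpen U)
    (T : ℝ) (u : EuclideanSpace ℝ (Fin n) → ℝ → ℝ)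
    (hsmooth : ContDiffOn ℝ (⊤ : ℕ∞) (fun p : (EuclideanSpace ℝ (Fin n)) × ℝ => u p.1 p.2)
      (U ×ˢ Set.Ioo 0 T))
    (hpos : ∀ y ∈ U, ∀ t ∈ Set.Ioo (0 : ℝ) T, 0 < u y t)
    (hheat : ∀ y ∈ U, ∀ t ∈ Set.Ioo (0 : ℝ) T,
      deriv (fun s => u y s) t = lap (fun z => u z t) y)
    (Υ : EuclideanSpace ℝ (Fin n) → ℝ → Fin n → Fin n → ℝ)
    (hΥ : ∀ y t i j, Υ y t i j
      = hess i j (fun z => u z t) y + (u y t / (2 * t)) * (if i = j then 1 else 0)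
        - pdv i (fun z => u z t) y * pdv j (fun z => u z t) y / u y t)
    (Q : EuclideanSpace ℝ (Fin n) → ℝ → ℝ)
    (hQ : ∀ y t, Q y t = ∑ i, Υ y t i i) :
    ∀ y ∈ U, ∀ t ∈ Set.Ioo (0 : ℝ) T,
      (Q y t = u y t * (lap (fun z => Real.log (u z t)) y + n / (2 * t)))
      ∧ deriv (fun s => Q y s) t - lap (fun z => Q z t) y
          = (2 / u y t) * (∑ i, ∑ j, (Υ y t i j) ^ 2) - (2 / t) * Q y t := by
  intro y hy t ht
  have hnhds : U ×ˢ Ioo 0 T ∈ 𝓝 (y, t) := (hU.prod isOpen_Ioo).mem_nhds ⟨hy, ht⟩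
  have hheat_near := mem_of_superset hnhds fun q hq => hheat q.1 hq.1 q.2 hq.2
  exact stmt6_general ((hsmooth.contDiffAt hnhds).of_le ENat.LEInfty.out) (hpos y hy t ht)
    ht.1.ne' hheat_near hΥ hQ
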